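/- arXiv:2209.08870 — 2 statements merged into one kernel-verified Lean document; each statement's English description precedes it below -/
import Mathlib

section
/- Let H be a complex Hilbert space, q ∈ (0,1), and Z₁, Z₂, Z₃, Z₄ bounded operators on H satisfying the Vaksman–Soibelman S_q^7 relations. Let n, m, k ∈ ℕ and suppose ξ ∈ H satisfies Z₁Z₁*ξ = q^{2(n+m+k)} ξ, Z₂Z₂*ξ = (1−q^{2k}) q^{2(n+m)} ξ, Z₃Z₃*ξ = q^{2n}(1−q^{2m}) ξ, and Z₄Z₄*ξ = (1−q^{2n}) ξ. Let r, t ∈ ℕ with k + m + t = r + n, and set w = (Z₄*)^n (Z₃*)^m (Z₂*)^k (Z₁*)^r Z₁^t ξ. Then Z₁Z₁* w = w and Z_iZ_i* w = 0 for i = 2, 3, 4. -/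
/-- The Vaksman–Soibelman `S_q^7` relations for a 4-tuple of elements of a unital
complex *-algebra. -/
def VSRel {A : Type*} [Ring A] [StarRing A] [Algebra ℂ A] (q : ℝ) (z : Fin 4 → A) : Prop :=
  (∀ i j : Fin 4, i < j → z i * z j = (q : ℂ) • (z j * z i)) ∧
  (∀ i j : Fin 4, i ≠ j → star (z j) * z i = (q : ℂ) • (z i * star (z j))) ∧
  (∀ k : Fin 4, star (z k) * z k
      = z k * star (z k) + (1 - (q : ℂ) ^ 2) • ∑ j ∈ Finset.Iio k, z j * star (z j)) ∧
  ∑ k : Fin 4, z k * star (z k) = 1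

lemma qs_pow {H : Type*} [NormedAddCommGroup H] [InnerProductSpace ℂ H]
    (A S : H →L[ℂ] H) (c l : ℂ) (h : A * S = c • (S * A)) (p : ℕ) (v : H)
    (hv : A v = l • v) : A ((S ^ p) v) = (c ^ p * l) • (S ^ p) v := by
  induction p with
  | zero => simpa using hv
  | succ p ih =>
    have e : A (S ((S ^ p) v)) = c • S (A ((S ^ p) v)) := by
      have := congrArg (fun T : H →L[ℂ] H => T ((S ^ p) v)) h
      simpa using this
    rw [pow_succ', mul_apply_eq_comp, e, ih, map_smul, smul_smul]
    congr 1
    ring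

lemma qs_comm {A : Type*} [Ring A] [StarRing A] [Algebra ℂ A] (q : ℂ) (hq : q ≠ 0) (x y : A)
    (h1 : y * star x = q • (star x * y)) (h2 : y * x = q • (x * y)) :
    x * star x * y = (q⁻¹ ^ 2) • (y * (x * star x)) := by
  have : y * (x * star x) = (q ^ 2) • (x * star x * y) := by
    rw [← mul_assoc, h2, smul_mul_assoc, mul_assoc, h1, mul_smul_comm, smul_smul, mul_assoc, sq]
  rw [this, smul_smul, ← mul_pow, inv_mul_cancel₀ hq, one_pow, one_smul]

/-- If `ξ` is a joint eigenvector of the `Z_i Z_i*` with eigenvalues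
`q^{2(n+m+k)}, (1-q^{2k})q^{2(n+m)}, q^{2n}(1-q^{2m}), 1-q^{2n}`, then
`w = (Z₄*)^n (Z₃*)^m (Z₂*)^k (Z₁*)^r Z₁^t ξ` (with `k+m+t = r+n`) satisfies
`Z₁Z₁*w = w` and `Z_iZ_i*w = 0` for `i = 2,3,4`. -/
theorem eigenvector_qSphere_back {H : Type*} [NormedAddCommGroup H] [InnerProductSpace ℂ H]
    [CompleteSpace H] (q : ℝ) (hq : q ∈ Set.Ioo (0 : ℝ) 1)
    (Z₁ Z₂ Z₃ Z₄ : H →L[ℂ] H) (hVS : VSRel q ![Z₁, Z₂, Z₃, Z₄])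
    (n m k : ℕ) (ξ : H)
    (h1 : (Z₁ * star Z₁) ξ = ((q : ℂ) ^ (2 * (n + m + k))) • ξ)
    (h2 : (Z₂ * star Z₂) ξ = ((1 - (q : ℂ) ^ (2 * k)) * (q : ℂ) ^ (2 * (n + m))) • ξ)
    (h3 : (Z₃ * star Z₃) ξ = ((q : ℂ) ^ (2 * n) * (1 - (q : ℂ) ^ (2 * m))) • ξ)
    (h4 : (Z₄ * star Z₄) ξ = (1 - (q : ℂ) ^ (2 * n)) • ξ)
    (r t : ℕ) (hrt : k + m + t = r + n) (w : H)
    (hw : w = ((star Z₄) ^ n * (star Z₃) ^ m * (star Z₂) ^ k * (star Z₁) ^ r * Z₁ ^ t) ξ) :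
    (Z₁ * star Z₁) w = w ∧ (Z₂ * star Z₂) w = 0 ∧
    (Z₃ * star Z₃) w = 0 ∧ (Z₄ * star Z₄) w = 0 := by
  have hq0 : (q : ℂ) ≠ 0 := by exact_mod_cast hq.1.ne'
  obtain ⟨ha, hb, hc, hd⟩ := hVS
  have key : ∀ j : Fin 4, 0 < j → ∀ Z, ![Z₁, Z₂, Z₃, Z₄] j = Z →
      Z₁ * star Z₁ * star Z = ((q : ℂ)⁻¹ ^ 2) • (star Z * (Z₁ * star Z₁)) := by
    intro j hj Z hZ
    have a := ha 0 j hj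
    have b := hb 0 j hj.ne
    rw [hZ] at a b
    refine qs_comm _ hq0 _ _ ?_ b
    have := congrArg star a
    simpa using this
  have k2 := key 1 (by decide) Z₂ rfl
  have k3 := key 2 (by decide) Z₃ rfl
  have k4 := key 3 (by decide) Z₄ rfl
  have c1 : star Z₁ * Z₁ = Z₁ * star Z₁ := by
    have := hc 0
    have e : Finset.Iio (0 : Fin 4) = ∅ := by decide
    simpa [e] using this
  have e1 : Z₁ * star Z₁ * Z₁ = (1 : ℂ) • (Z₁ * (Z₁ * star Z₁)) := by
    rw [one_smul, mul_assoc, c1]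
  have e2 : Z₁ * star Z₁ * star Z₁ = (1 : ℂ) • (star Z₁ * (Z₁ * star Z₁)) := by
    rw [one_smul, ← mul_assoc, c1]
  have f := qs_pow _ _ _ _ k4 n _ (qs_pow _ _ _ _ k3 m _ (qs_pow _ _ _ _ k2 k _
    (qs_pow _ _ _ _ e2 r _ (qs_pow _ _ _ _ e1 t _ h1))))
  have hw1 : (Z₁ * star Z₁) w = w := by
    have hcoef : ((q : ℂ)⁻¹ ^ 2) ^ n * (((q : ℂ)⁻¹ ^ 2) ^ m * (((q : ℂ)⁻¹ ^ 2) ^ k *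
        (1 ^ r * (1 ^ t * (q : ℂ) ^ (2 * (n + m + k)))))) = 1 := by
      simp only [one_pow, one_mul, pow_mul, ← mul_assoc, ← pow_add]
      rw [← add_assoc, ← mul_pow, ← mul_pow, inv_mul_cancel₀ hq0, one_pow, one_pow]
    rw [hcoef, one_smul] at f
    rw [hw]
    exact f
  have ip : ∀ Z : H →L[ℂ] H, RCLike.re (inner ℂ ((Z * star Z) w) w) = ‖star Z w‖ ^ 2 := by
    intro Z
    rw [mul_apply_eq_comp, ← ContinuousLinearMap.adjoint_inner_right,
      ← ContinuousLinearMap.star_eq_adjoint, inner_self_eq_norm_sq]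
  have hs : (Z₂ * star Z₂) w + (Z₃ * star Z₃) w + (Z₄ * star Z₄) w = 0 := by
    have := congrArg (fun T : H →L[ℂ] H => T w) hd
    simp only [Fin.sum_univ_four] at this
    change (Z₁ * star Z₁) w + (Z₂ * star Z₂) w + (Z₃ * star Z₃) w + (Z₄ * star Z₄) w = w at this
    rw [hw1, add_assoc, add_assoc] at this
    rw [add_assoc]
    exact left_eq_add.mp this.symm
  have hn := congrArg (fun v => RCLike.re (inner ℂ v w)) hs
  simp only [inner_add_left, map_add, ip, inner_zero_left, map_zero] at hn
  have z : ∀ Z : H →L[ℂ] H, ‖star Z w‖ ^ 2 = 0 → (Z * star Z) w = 0 := by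
    intro Z h
    rw [mul_apply_eq_comp, norm_eq_zero.mp (pow_eq_zero_iff (two_ne_zero) |>.mp h),
      map_zero]
  have p2 := sq_nonneg ‖star Z₂ w‖
  have p3 := sq_nonneg ‖star Z₃ w‖
  have p4 := sq_nonneg ‖star Z₄ w‖
  exact ⟨hw1, z _ (by linarith), z _ (by linarith), z _ (by linarith)⟩
end

section
/- Let A be a unital C*-algebra, q ∈ (0,1), and z₁, z₂, z₃, z₄ ∈ A elements satisfying the Vaksman–Soibelman S_q^7 relations. With the coefficients c_{j}(N) defined by c_{0,0,0,0}(0) = 1 and the recursion c_{j₁,j₂,j₃,j₄}(N+1) = q⁴q^{2(j₂+j₃−j₄)} c_{j₁−1,j₂,j₃,j₄}(N) + q²q^{2(j₃−j₄)} c_{j₁,j₂−1,j₃,j₄}(N) + q^{−2j₄} c_{j₁,j₂,j₃−1,j₄}(N) + c_{j₁,j₂,j₃,j₄−1}(N) (terms with a negative index being 0), all c_j(N) are nonnegative, and for every N ∈ ℕ the matrix P_N, indexed by multi-indices j = (j₁,j₂,j₃,j₄) ∈ ℕ⁴ with j₁+j₂+j₃+j₄ = N and with entries (P_N)_{j,j'}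 = ψ_j ψ_{j'}*, where ψ_j = √(c_j(N)) · (z₄*)^{j₄} z₃^{j₃} z₂^{j₂} (z₁*)^{j₁}, is a projection: P_N² = P_N and P_N* = P_N. -/
/-- The recursively defined coefficients `c_{j₁,j₂,j₃,j₄}(N)`: `c_{0,0,0,0}(0) = 1`,
any coefficient with a negative index vanishes, and
`c_{j₁,j₂,j₃,j₄}(N+1) = q⁴q^{2(j₂+j₃-j₄)} c_{j₁-1,j₂,j₃,j₄}(N)
  + q²q^{2(j₃-j₄)} c_{j₁,j₂-1,j₃,j₄}(N) + q^{-2j₄} c_{j₁,j₂,j₃-1,j₄}(N)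
  + c_{j₁,j₂,j₃,j₄-1}(N)`. -/
noncomputable def coef (q : ℝ) : ℕ → ℤ → ℤ → ℤ → ℤ → ℝ
  | 0, j₁, j₂, j₃, j₄ => if j₁ = 0 ∧ j₂ = 0 ∧ j₃ = 0 ∧ j₄ = 0 then 1 else 0
  | N + 1, j₁, j₂, j₃, j₄ =>
      q ^ 4 * q ^ (2 * (j₂ + j₃ - j₄)) * coef q N (j₁ - 1) j₂ j₃ j₄
        + q ^ 2 * q ^ (2 * (j₃ - j₄)) * coef q N j₁ (j₂ - 1) j₃ j₄
        + q ^ (-2 * j₄) * coef q N j₁ j₂ (j₃ - 1) j₄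
        + coef q N j₁ j₂ j₃ (j₄ - 1)

/-- `ψ_j = √(c_j(N)) (z₄*)^{j₄} z₃^{j₃} z₂^{j₂} (z₁*)^{j₁}`. -/
noncomputable def psiVec {A : Type*} [Ring A] [Algebra ℂ A] [StarRing A]
    (q : ℝ) (z₁ z₂ z₃ z₄ : A) (N : ℕ) (j : Fin 4 → ℕ) : A :=
  ((Real.sqrt (coef q N (j 0) (j 1) (j 2) (j 3)) : ℝ) : ℂ) •
    ((star z₄) ^ (j 3) * z₃ ^ (j 2) * z₂ ^ (j 1) * (star z₁) ^ (j 0))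

/-- The matrix `P_N` indexed by the multi-indices `j` with `j₁+j₂+j₃+j₄ = N`, with
entries `(P_N)_{j,j'} = ψ_j ψ_{j'}*`. -/
noncomputable def projMat {A : Type*} [Ring A] [Algebra ℂ A] [StarRing A]
    (q : ℝ) (z₁ z₂ z₃ z₄ : A) (N : ℕ) :
    Matrix (Finset.Nat.antidiagonalTuple 4 N) (Finset.Nat.antidiagonalTuple 4 N) A :=
  Matrix.of fun j j' =>
    psiVec q z₁ z₂ z₃ z₄ N j * star (psiVec q z₁ z₂ z₃ z₄ N j')

theorem coef_nonneg' (q : ℝ) (hq : 0 < q) (N : ℕ) : ∀ j₁ j₂ j₃ j₄ : ℤ, 0 ≤ coef q N j₁ j₂ j₃ j₄ := by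
  induction N with
  | zero => intro a b c d; unfold coef; split_ifs <;> norm_num
  | succ N ih =>
    intro a b c d
    unfold coef
    have h1 := ih (a-1) b c d
    have h2 := ih a (b-1) c d
    have h3 := ih a b (c-1) d
    have h4 := ih a b c (d-1)
    positivity

theorem coef_neg' (q : ℝ) (N : ℕ) : ∀ j₁ j₂ j₃ j₄ : ℤ, (j₁ < 0 ∨ j₂ < 0 ∨ j₃ < 0 ∨ j₄ < 0) →
    coef q N j₁ j₂ j₃ j₄ = 0 := by
  induction N with
  | zero => intro a b c d h; unfold coef; rw [if_neg]; omega
  | succ N ih =>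
    intro a b c d h
    unfold coef
    rw [ih (a-1) b c d (by omega), ih a (b-1) c d (by omega), ih a b (c-1) d (by omega),
      ih a b c (d-1) (by omega)]
    simp

theorem sum_shift' {A : Type*} [AddCommMonoid A] (i : Fin 4) (N : ℕ) (f : (Fin 4 → ℕ) → A)
    (hf : ∀ j, j i = 0 → f j = 0) :
    ∑ j ∈ Finset.Nat.antidiagonalTuple 4 (N+1), f j
      = ∑ k ∈ Finset.Nat.antidiagonalTuple 4 N, f (k + Pi.single i 1) := by
  symm
  apply Finset.sum_of_injOn (fun k => k + Pi.single i 1)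
  · intro a _ b _ h
    exact add_right_cancel h
  · intro a ha
    have ha' := Finset.Nat.mem_antidiagonalTuple.1 (Finset.mem_coe.1 ha)
    apply Finset.mem_coe.2
    rw [Finset.Nat.mem_antidiagonalTuple]
    simp [Finset.sum_add_distrib, ha']
  · intro j hj hn
    apply hf
    by_contra h
    apply hn
    have hle : Pi.single i 1 ≤ j := by
      intro t
      by_cases ht : t = i
      · subst ht; simp; omega
      · simp [ht]
    refine ⟨j - Pi.single i 1, ?_, tsub_add_cancel_of_le hle⟩
    apply Finset.mem_coe.2
    rw [Finset.Nat.mem_antidiagonalTuple]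
    have hj' := Finset.Nat.mem_antidiagonalTuple.1 hj
    have h2 : ∑ t, ((j - Pi.single i 1) + Pi.single i 1 : Fin 4 → ℕ) t = N + 1 := by
      rw [tsub_add_cancel_of_le hle]; exact hj'
    simp only [Pi.add_apply, Finset.sum_add_distrib] at h2
    rw [Finset.sum_pi_single'] at h2
    simpa using h2
  · intro k _; rfl


theorem pow_comm' {A : Type*} [Ring A] [Algebra ℝ A] {x y : A} {s : ℝ} (h : x * y = s • (y * x)) (n : ℕ) :
    x * y ^ n = s ^ n • (y ^ n * x) := by
  induction n with
  | zero => simp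
  | succ n ih =>
    rw [pow_succ, ← mul_assoc, ih, smul_mul_assoc, mul_assoc, h, mul_smul_comm, smul_smul,
      mul_assoc, ← pow_succ]

def Xm {A : Type*} [Ring A] (x₁ x₂ x₃ x₄ : A) (j : Fin 4 → ℕ) : A :=
  x₄ ^ j 3 * x₃ ^ j 2 * x₂ ^ j 1 * x₁ ^ j 0

theorem key' {A : Type*} [Ring A] [StarRing A] [Algebra ℝ A] [StarModule ℝ A]
    (q : ℝ) (hq : 0 < q) (x₁ x₂ x₃ x₄ : A)
    (h34 : x₃ * x₄ = q⁻¹ • (x₄ * x₃)) (h24 : x₂ * x₄ = q⁻¹ • (x₄ * x₂))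
    (h14 : x₁ * x₄ = q⁻¹ • (x₄ * x₁)) (h23 : x₂ * x₃ = q • (x₃ * x₂))
    (h13 : x₁ * x₃ = q • (x₃ * x₁)) (h12 : x₁ * x₂ = q • (x₂ * x₁))
    (hs : q ^ 4 • (star x₁ * x₁) + q ^ 2 • (star x₂ * x₂) + star x₃ * x₃ + star x₄ * x₄ = 1)
    (N : ℕ) :
    ∑ j ∈ Finset.Nat.antidiagonalTuple 4 N, coef q N (j 0) (j 1) (j 2) (j 3) •
      (star (Xm x₁ x₂ x₃ x₄ j) * Xm x₁ x₂ x₃ x₄ j) = 1 := by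
  induction N with
  | zero =>
    simp [Finset.Nat.antidiagonalTuple_zero_right, Xm, coef]
  | succ N ih =>
    have e4 : ∀ k, x₄ * Xm x₁ x₂ x₃ x₄ k = Xm x₁ x₂ x₃ x₄ (k + Pi.single 3 1) := by
      intro k; simp [Xm, pow_succ', mul_assoc]
    have e3 : ∀ k, x₃ * Xm x₁ x₂ x₃ x₄ k
        = (q⁻¹ ^ k 3) • Xm x₁ x₂ x₃ x₄ (k + Pi.single 2 1) := by
      intro k
      have := pow_comm' h34 (k 3)
      simp only [Xm, ← mul_assoc, this, smul_mul_assoc]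
      simp [pow_succ', mul_assoc]
    have e2 : ∀ k, x₂ * Xm x₁ x₂ x₃ x₄ k
        = (q⁻¹ ^ k 3 * q ^ k 2) • Xm x₁ x₂ x₃ x₄ (k + Pi.single 1 1) := by
      intro k
      have a := pow_comm' h24 (k 3)
      have b := pow_comm' h23 (k 2)
      simp only [Xm, ← mul_assoc, a, smul_mul_assoc]
      rw [mul_assoc _ x₂, b]
      simp only [mul_smul_comm, smul_mul_assoc, smul_smul]
      simp [pow_succ', mul_assoc]
    have e1 : ∀ k, x₁ * Xm x₁ x₂ x₃ x₄ k
        = (q⁻¹ ^ k 3 * q ^ k 2 * q ^ k 1) • Xm x₁ x₂ x₃ x₄ (k + Pi.single 0 1) := by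
      intro k
      have a := pow_comm' h14 (k 3)
      have b := pow_comm' h13 (k 2)
      have c := pow_comm' h12 (k 1)
      simp only [Xm, ← mul_assoc, a, smul_mul_assoc]
      rw [mul_assoc _ x₁, b]
      simp only [mul_smul_comm, smul_mul_assoc, smul_smul, ← mul_assoc]
      rw [mul_assoc _ x₁, c]
      simp only [mul_smul_comm, smul_mul_assoc, smul_smul, ← mul_assoc]
      simp [pow_succ', mul_assoc]
    have hM : ∀ (x : A) (s : ℝ) (k k' : Fin 4 → ℕ), x * Xm x₁ x₂ x₃ x₄ k = s • Xm x₁ x₂ x₃ x₄ k' →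
        star (Xm x₁ x₂ x₃ x₄ k) * (star x * x) * Xm x₁ x₂ x₃ x₄ k
          = (s ^ 2) • (star (Xm x₁ x₂ x₃ x₄ k') * Xm x₁ x₂ x₃ x₄ k') := by
      intro x s k k' h
      have : star (Xm x₁ x₂ x₃ x₄ k) * (star x * x) * Xm x₁ x₂ x₃ x₄ k
        = star (x * Xm x₁ x₂ x₃ x₄ k) * (x * Xm x₁ x₂ x₃ x₄ k) := by
        simp [star_mul, mul_assoc]
      rw [this, h, star_smul, smul_mul_assoc, mul_smul_comm, smul_smul, pow_two]
      simp
    simp only [coef, add_smul, Finset.sum_add_distrib]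
    rw [sum_shift' 0 N _ (fun j hj => by rw [coef_neg' q N _ _ _ _ (by simp [hj])]; simp),
      sum_shift' 1 N _ (fun j hj => by rw [coef_neg' q N _ _ _ _ (by simp [hj])]; simp),
      sum_shift' 2 N _ (fun j hj => by rw [coef_neg' q N _ _ _ _ (by simp [hj])]; simp),
      sum_shift' 3 N _ (fun j hj => by rw [coef_neg' q N _ _ _ _ (by simp [hj])]; simp),
      ← Finset.sum_add_distrib, ← Finset.sum_add_distrib, ← Finset.sum_add_distrib, ← ih]
    apply Finset.sum_congr rfl
    intro k _
    have h1 := hM _ _ _ _ (e1 k)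
    have h2 := hM _ _ _ _ (e2 k)
    have h3 := hM _ _ _ _ (e3 k)
    have h4 := hM _ 1 _ _ ((e4 k).trans (one_smul _ _).symm)
    have hmid : star (Xm x₁ x₂ x₃ x₄ k) * Xm x₁ x₂ x₃ x₄ k
       = q ^ 4 • (star (Xm x₁ x₂ x₃ x₄ k) * (star x₁ * x₁) * Xm x₁ x₂ x₃ x₄ k)
        + q ^ 2 • (star (Xm x₁ x₂ x₃ x₄ k) * (star x₂ * x₂) * Xm x₁ x₂ x₃ x₄ k)
        + (star (Xm x₁ x₂ x₃ x₄ k) * (star x₃ * x₃) * Xm x₁ x₂ x₃ x₄ k)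
        + (star (Xm x₁ x₂ x₃ x₄ k) * (star x₄ * x₄) * Xm x₁ x₂ x₃ x₄ k) := by
      conv_lhs => rw [← mul_one (star (Xm x₁ x₂ x₃ x₄ k)), ← hs]
      simp only [mul_add, add_mul, mul_smul_comm, smul_mul_assoc]
    have hq0 : q ≠ 0 := hq.ne'
    rw [hmid, h1, h2, h3, h4]
    simp only [smul_add, smul_smul]
    have z1 : q ^ (2 * ((k 1 : ℤ) + k 2 - k 3)) = (q⁻¹ ^ k 3 * q ^ k 2 * q ^ k 1) ^ 2 := by
      rw [mul_comm, zpow_mul, zpow_sub₀ hq0, zpow_add₀ hq0]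
      simp only [zpow_natCast, inv_pow]
      rw [show ((2:ℤ)) = ((2:ℕ):ℤ) from rfl, zpow_natCast]
      congr 1; field_simp
    have z2 : q ^ (2 * ((k 2 : ℤ) - k 3)) = (q⁻¹ ^ k 3 * q ^ k 2) ^ 2 := by
      rw [mul_comm, zpow_mul, zpow_sub₀ hq0]
      simp only [zpow_natCast, inv_pow]
      rw [show ((2:ℤ)) = ((2:ℕ):ℤ) from rfl, zpow_natCast]
      congr 1; field_simp
    have z3 : q ^ (-2 * (k 3 : ℤ)) = (q⁻¹ ^ k 3) ^ 2 := by
      rw [neg_mul, zpow_neg, mul_comm, zpow_mul]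
      simp only [zpow_natCast, inv_pow]
      rw [show ((2:ℤ)) = ((2:ℕ):ℤ) from rfl, zpow_natCast]
    congr 1
    · congr 1
      · congr 1
        · congr 1
          simp [z1]; ring
        · congr 1
          simp [z2]; ring
      · congr 1
        simp [-neg_mul, z3]
        try ring
    · congr 1
      simp


theorem projMat_isProjection {A : Type*} [NormedRing A] [StarRing A] [CStarRing A]
    [NormedAlgebra ℂ A] [CompleteSpace A]
    (q : ℝ) (hq : q ∈ Set.Ioo (0 : ℝ) 1) (z₁ z₂ z₃ z₄ : A)
    (hVS : VSRel q ![z₁, z₂, z₃, z₄]) :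
    (∀ (N : ℕ) (j₁ j₂ j₃ j₄ : ℤ), 0 ≤ coef q N j₁ j₂ j₃ j₄) ∧
    ∀ N : ℕ,
      projMat q z₁ z₂ z₃ z₄ N * projMat q z₁ z₂ z₃ z₄ N = projMat q z₁ z₂ z₃ z₄ N ∧
      Matrix.conjTranspose (projMat q z₁ z₂ z₃ z₄ N) = projMat q z₁ z₂ z₃ z₄ N := by
  have hnn := coef_nonneg' q hq.1
  refine ⟨hnn, fun N => ⟨?_, ?_⟩⟩
  swap
  · ext j j'
    simp [projMat, Matrix.conjTranspose_apply]
  have hq0 : q ≠ 0 := hq.1.ne'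
  have : StarModule ℝ A := ⟨fun r a => by
    have := map_real_smul (starAddEquiv : A ≃+ A) (continuous_star : Continuous (star : A → A)) r a
    simpa using this⟩
  obtain ⟨hc, hsc, hk, h1⟩ := hVS
  have cs : ∀ (r : ℝ) (a : A), (r : ℂ) • a = r • a := fun r a => Complex.coe_smul r a
  have inv : ∀ a b : A, a = q • b → b = q⁻¹ • a := by
    rintro a b rfl; rw [smul_smul, inv_mul_cancel₀ hq0, one_smul]
  have c14 := hc 0 3 (by decide)
  have c23 := hc 1 2 (by decide)
  have s34 := hsc 2 3 (by decide)
  have s24 := hsc 1 3 (by decide)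
  have s13 := hsc 2 0 (by decide)
  have s12 := hsc 1 0 (by decide)
  have k3 := hk 2
  have k2 := hk 1
  have i2 : Finset.Iio (2 : Fin 4) = {0, 1} := by decide
  have i1 : Finset.Iio (1 : Fin 4) = {0} := by decide
  have c1 : (1 - (q:ℂ)^2) = ((1 - q^2 : ℝ) : ℂ) := by push_cast; rfl
  rw [i2, c1, cs] at k3
  rw [i1, c1, cs] at k2
  rw [cs] at c14 c23 s34 s24 s13 s12
  simp [Fin.sum_univ_four] at c14 c23 s34 s24 s13 s12 k3 k2 h1
  have key := key' q hq.1 (star z₁) z₂ z₃ (star z₄)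
    (inv _ _ s34) (inv _ _ s24)
    (inv _ _ (by have := congrArg star c14; simpa [star_mul, star_smul] using this))
    c23 s13 s12
    (by
      rw [k3, k2, star_star, star_star, ← h1]
      module) N
  have hpsi : ∀ j, psiVec q z₁ z₂ z₃ z₄ N j
      = Real.sqrt (coef q N (j 0) (j 1) (j 2) (j 3)) • Xm (star z₁) z₂ z₃ (star z₄) j := by
    intro j; rw [psiVec, cs, Xm]
  have hsum : ∑ j : Finset.Nat.antidiagonalTuple 4 N,
      star (psiVec q z₁ z₂ z₃ z₄ N j) * psiVec q z₁ z₂ z₃ z₄ N j = 1 := by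
    rw [← key, ← Finset.sum_coe_sort (Finset.Nat.antidiagonalTuple 4 N)]
    apply Finset.sum_congr rfl
    intro j _
    rw [hpsi, star_smul, smul_mul_assoc, mul_smul_comm, smul_smul]
    simp [Real.mul_self_sqrt (hnn _ _ _ _ _)]
  ext j j'
  rw [Matrix.mul_apply]
  simp only [projMat, Matrix.of_apply]
  calc _ = psiVec q z₁ z₂ z₃ z₄ N j * (∑ k : Finset.Nat.antidiagonalTuple 4 N,
      star (psiVec q z₁ z₂ z₃ z₄ N k) * psiVec q z₁ z₂ z₃ z₄ N k)
        * star (psiVec q z₁ z₂ z₃ z₄ N j') := by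
        rw [Finset.mul_sum, Finset.sum_mul]
        simp only [mul_assoc]
    _ = _ := by rw [hsum, mul_one]
end
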